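/- Let T be a rooted, countably infinite, locally finite tree and let S be the forward shift. For every λ ∈ ℂ with |λ| < 1, there is no f ∈ 𝓛 satisfying Sf − λ·f = χ_{o}, where χ_{o} is the characteristic function of the root; consequently S − λI is not surjective on 𝓛 for any λ in the open unit disk. -/

import Mathlib

/-!
The equation `Sf - λf = χ_{o}` reads `λ f(o) = -1` at the root and `f(par v) = λ f(v)` elsewhere,
so it has at most the solution `f(v) = -λ^{-(|v|+1)}` (`LipTree.mul_pow_depth_eq`). For `v ≠ o` its
derivative is `f'(v) = (1 - λ) f(v)`, hence `|1 - λ| = |f'(v)| |λ|^{|v|+1} ≤ ‖f‖ |λ|^{|v|+1}`.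
Since the tree is infinite and locally finite, it has vertices of arbitrarily large depth
(`LipTree.exists_lt_depth`), so letting `|v| → ∞` gives `λ = 1`, contradicting `|λ| < 1`.
-/

open scoped ENNReal NNReal

/-- A rooted, countably infinite, locally finite tree, encoded via its parent
function and depth function. Every non-root vertex `v` has a parent `par v`
one level closer to the root; iterating the parent function from any vertex
eventually reaches the root (this is forced by the depth function decreasing). -/
structure LipTree where
  V : Type
  countable : Countable V
  infinite : Infinite V
  root : V
  par : V → V
  par_root : par root = root
  depth : V → ℕ
  depth_root : depth root = 0
  depth_par : ∀ v, v ≠ root → depth v = depth (par v) + 1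
  locFin : ∀ v : V, {w : V | w ≠ root ∧ par w = v}.Finite

namespace LipTree

variable (T : LipTree)

/-- The set of children of a vertex. -/
def children (v : T.V) : Set T.V := {w | w ≠ T.root ∧ T.par w = v}

/-- `γ(v)`: the number of children of `v`. -/
noncomputable def gamma (v : T.V) : ℕ := (T.locFin v).toFinset.card

open Classical in
/-- `f'`, the "derivative" of `f` : `f'(o) = f(o)`, `f'(v) = f(v) - f(par v)` otherwise. -/
noncomputable def deriv (f : T.V → ℂ) : T.V → ℂ :=
  fun v => if v = T.root then f v else f v - f (T.par v)

/-- `‖f‖ = sup_{v} |f'(v)|`, valued in `[0,∞]`. -/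
noncomputable def lnorm (f : T.V → ℂ) : ℝ≥0∞ := ⨆ v, (‖T.deriv f v‖₊ : ℝ≥0∞)

/-- The Lipschitz space `𝓛`. -/
def Lip : Set (T.V → ℂ) := {f | T.lnorm f < ⊤}

/-- The little Lipschitz space `𝓛₀`: members of `𝓛` with `f'(v) → 0` as `|v| → ∞`. -/
def Lip0 : Set (T.V → ℂ) :=
  {f | T.lnorm f < ⊤ ∧
    Filter.Tendsto (T.deriv f) (Filter.comap T.depth Filter.atTop) (nhds 0)}

open Classical in
/-- The forward shift `S`. -/
noncomputable def fshift (f : T.V → ℂ) : T.V → ℂ :=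
  fun v => if v = T.root then 0 else f (T.par v)

/-- The backward shift `B`: `(Bf)(v) = Σ_{w child of v} f(w)`. -/
noncomputable def bshift (f : T.V → ℂ) : T.V → ℂ :=
  fun v => ∑ w ∈ (T.locFin v).toFinset, f w

/-- `T` is leafless: every vertex has a child. -/
def Leafless : Prop := ∀ v : T.V, (T.children v).Nonempty

/-- The sector (subtree) determined by `v`: `v` together with all its descendants. -/
def sector (v : T.V) : Set T.V := {w | ∃ n : ℕ, T.par^[n] w = v}

/-- `T` is homogeneous by sectors at level `N`. -/
def HomBySectors (N : ℕ) : Prop :=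
  ∀ v : T.V, T.depth v = N → ∀ w ∈ T.sector v, T.gamma w = T.gamma v

/-- `T` is homogeneous of order `γ`. -/
def Homogeneous (γ : ℕ) : Prop := ∀ v : T.V, T.gamma v = γ

/-- The operator norm of `Bⁿ` on `𝓛`: `sup { ‖Bⁿ f‖ : ‖f‖ ≤ 1 }`. -/
noncomputable def opNormBpow (n : ℕ) : ℝ≥0∞ :=
  ⨆ f ∈ {f : T.V → ℂ | T.lnorm f ≤ 1}, T.lnorm (T.bshift^[n] f)

/-- The operator norm of `B` on `𝓛`: `sup { ‖B f‖ : ‖f‖ ≤ 1 }`. -/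
noncomputable def opNormB : ℝ≥0∞ :=
  ⨆ f ∈ {f : T.V → ℂ | T.lnorm f ≤ 1}, T.lnorm (T.bshift f)

/-- The quantity `Λ = sup_{v ≠ o} (γ(v) + γ(par v) - 1 + |γ(v) - 1| + |γ(v) - γ(par v)|·|v|)`. -/
noncomputable def Lambda : ℝ≥0∞ :=
  ⨆ v ∈ {v : T.V | v ≠ T.root},
    ((T.gamma v + T.gamma (T.par v) - 1
      + ((T.gamma v : ℤ) - 1).natAbs
      + ((T.gamma v : ℤ) - (T.gamma (T.par v) : ℤ)).natAbs * T.depth v : ℕ) : ℝ≥0∞)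

/-- An operator `A` on `𝓛₀` is hypercyclic if some orbit `{Aⁿ f}` is dense in `𝓛₀`. -/
def Hypercyclic (A : (T.V → ℂ) → (T.V → ℂ)) : Prop :=
  ∃ f ∈ T.Lip0, ∀ g ∈ T.Lip0, ∀ ε : ℝ≥0∞, 0 < ε →
    ∃ n : ℕ, T.lnorm (A^[n] f - g) < ε

end LipTree

namespace LipTree

/-- Local finiteness makes every ball around the root finite. -/
lemma finite_depth_le (T : LipTree) (n : ℕ) : {v : T.V | T.depth v ≤ n}.Finite := by
  induction n with
  | zero =>
    refine (Set.finite_singleton T.root).subset fun v hv => ?_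
    by_contra hne
    have := T.depth_par v hne
    simp only [Set.mem_setOf_eq] at hv
    omega
  | succ n ih =>
    refine ((Set.finite_singleton T.root).union
      (ih.biUnion fun u _ => T.locFin u)).subset fun v hv => ?_
    by_cases hne : v = T.root
    · exact Or.inl hne
    · have := T.depth_par v hne
      simp only [Set.mem_setOf_eq] at hv
      refine Or.inr (Set.mem_biUnion (x := T.par v) ?_ ⟨hne, rfl⟩)
      simp only [Set.mem_setOf_eq]
      omega

lemma exists_lt_depth (T : LipTree) (n : ℕ) : ∃ v : T.V, n < T.depth v := by
  by_contra! h
  have := T.infinite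
  exact Set.infinite_univ ((T.finite_depth_le n).subset fun v _ => h v)

/-- The equation `Sf - λf = χ_{o}` forces `f(v) = -λ^{-(|v|+1)}`; the form without division
also covers `λ = 0`, where it is contradictory. -/
lemma mul_pow_depth_eq (T : LipTree) {lam : ℂ} {f : T.V → ℂ}
    (hroot : lam * f T.root = -1)
    (hpar : ∀ v, v ≠ T.root → f (T.par v) = lam * f v) (v : T.V) :
    f v * lam ^ (T.depth v + 1) = -1 := by
  induction h : T.depth v generalizing v with
  | zero =>
    have hv : v = T.root := by
      by_contra hne
      have := T.depth_par v hne
      omega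
    subst hv
    linear_combination hroot
  | succ n ih =>
    have hne : v ≠ T.root := by
      rintro rfl
      have := T.depth_root
      omega
    have hd := T.depth_par v hne
    have := ih (T.par v) (by omega)
    rw [hpar v hne] at this
    linear_combination this

lemma norm_deriv_le (T : LipTree) {f : T.V → ℂ} (hf : f ∈ T.Lip) (v : T.V) :
    ‖T.deriv f v‖ ≤ (T.lnorm f).toReal := by
  have h : (‖T.deriv f v‖₊ : ℝ≥0∞) ≤ T.lnorm f :=
    le_iSup (fun v => (‖T.deriv f v‖₊ : ℝ≥0∞)) v
  simpa using ENNReal.toReal_mono (ne_of_lt hf) h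

end LipTree

open Classical

/-- For `|λ| < 1` there is no `f ∈ 𝓛` with `Sf - λf = χ_{root}`;
hence `S - λI` is not surjective on `𝓛` for `λ` in the open unit disk. -/
theorem fshift_sub_lambda_not_surjective (T : LipTree) (lam : ℂ) (hlam : ‖lam‖ < 1) :
    ¬ ∃ f ∈ T.Lip, (fun v => T.fshift f v - lam * f v) =
      (fun v => if v = T.root then (1 : ℂ) else 0) := by
  rintro ⟨f, hf, heq⟩
  have hroot : lam * f T.root = -1 := by
    have h := congrFun heq T.root
    simp only [LipTree.fshift, if_true] at h
    linear_combination -h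
  have hpar : ∀ v, v ≠ T.root → f (T.par v) = lam * f v := by
    intro v hv
    have h := congrFun heq v
    simp only [LipTree.fshift, if_neg hv] at h
    linear_combination h
  set C := (T.lnorm f).toReal
  have hbound : ∀ n : ℕ, ‖1 - lam‖ ≤ C * ‖lam‖ ^ n := by
    intro n
    obtain ⟨v, hv⟩ := T.exists_lt_depth n
    have hne : v ≠ T.root := by
      rintro rfl
      have := T.depth_root
      omega
    have hderiv : T.deriv f v * lam ^ (T.depth v + 1) = -(1 - lam) := by
      simp only [LipTree.deriv, if_neg hne, hpar v hne]
      linear_combination (1 - lam) * T.mul_pow_depth_eq hroot hpar v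
    calc ‖1 - lam‖ = ‖T.deriv f v‖ * ‖lam‖ ^ (T.depth v + 1) := by
          rw [← norm_neg, ← hderiv, norm_mul, norm_pow]
      _ ≤ C * ‖lam‖ ^ n :=
          mul_le_mul (T.norm_deriv_le hf v)
            (pow_le_pow_of_le_one (norm_nonneg _) hlam.le (by omega))
            (by positivity) ENNReal.toReal_nonneg
  have hlim : Filter.Tendsto (fun n : ℕ => C * ‖lam‖ ^ n) Filter.atTop (nhds 0) := by
    simpa using (tendsto_pow_atTop_nhds_zero_of_lt_one (norm_nonneg lam) hlam).const_mul C
  have h0 : ‖1 - lam‖ ≤ 0 := ge_of_tendsto' hlim hbound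
  have h1 : lam = 1 := (sub_eq_zero.mp (norm_le_zero_iff.mp h0)).symm
  simp [h1] at hlam
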